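/- Let C ⊆ F_2^n be a binary linear code, let i ∈ {1,...,n} and let λ ∈ (0,1). Then the bit erasure probability satisfies P_{b,i}(1-λ) = (1-λ) - ((1-λ)/λ) · Σ_{S ⊆ {1,...,n}, i ∈ S} λ^{|S|} (1-λ)^{n-|S|} · (f_C(S) - f_C(S\{i})). -/

import Mathlib

/-!
Adding the coordinate `i` to a set `R` raises the rank of the projected code by `0` or `1`, so
with `S = insert i R` the increment `f_C(S) - f_C(R)` is `1 - δ(R)`, where `δ(R)` is the indicator
of `r_C(R) < r_C(S)` (`rank_step`, `fC_step`). Reindexing the sum over `S ∋ i` by `R = S \ {i}`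
and absorbing the factor `(1 - λ) / λ` turns it into `∑ λ^|R| (1 - λ)^(n - |R|) (1 - δ(R))`. The
part with `1` equals `1 - λ` by the binomial theorem on `n - 1` coordinates, and the part
with `δ(R)` is `P_{b,i}(1 - λ)`.
-/

open Finset Filter

/-- The rate of a binary linear code. -/
noncomputable def codeRate {ι : Type} [Fintype ι] (C : Submodule (ZMod 2) (ι → ZMod 2)) : ℝ :=
  (Module.finrank (ZMod 2) C : ℝ) / (Fintype.card ι : ℝ)

/-- `weightEnum C i` is the number of codewords of Hamming weight `i`. -/
noncomputable def weightEnum {ι : Type} [Fintype ι] (C : Submodule (ZMod 2) (ι → ZMod 2))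
    (i : ℕ) : ℕ :=
  Nat.card {x : ι → ZMod 2 // x ∈ C ∧ hammingNorm x = i}

/-- The permutation `π` of coordinates maps the code `C` onto itself. -/
def PreservesCode {ι : Type} [Fintype ι] (C : Submodule (ZMod 2) (ι → ZMod 2))
    (π : Equiv.Perm ι) : Prop :=
  ∀ x : ι → ZMod 2, x ∈ C ↔ x ∘ π ∈ C

/-- The automorphism group of `C` acts 2-transitively on coordinates. -/
def DoublyTransitive {ι : Type} [Fintype ι] (C : Submodule (ZMod 2) (ι → ZMod 2)) : Prop :=
  ∀ i₁ j₁ i₂ j₂ : ι, i₁ ≠ j₁ → i₂ ≠ j₂ →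
    ∃ π : Equiv.Perm ι, PreservesCode C π ∧ π i₁ = i₂ ∧ π j₁ = j₂

/-- Minimal distance: the least Hamming weight of a nonzero codeword. -/
noncomputable def minDist {ι : Type} [Fintype ι] (C : Submodule (ZMod 2) (ι → ZMod 2)) : ℕ :=
  sInf {d | ∃ x ∈ C, x ≠ 0 ∧ hammingNorm x = d}

/-- Reed-Muller code RM(m,d). -/
noncomputable def ReedMuller (m d : ℕ) : Submodule (ZMod 2) ((Fin m → ZMod 2) → ZMod 2) :=
  Submodule.map
    (LinearMap.pi fun v : Fin m → ZMod 2 => (MvPolynomial.aeval v).toLinearMap)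
    (MvPolynomial.restrictTotalDegree (Fin m) (ZMod 2) d)

open scoped Classical in
/-- ML block error probability on BSC(p). -/
noncomputable def Perr {ι : Type} [Fintype ι] (C : Submodule (ZMod 2) (ι → ZMod 2)) (p : ℝ) : ℝ :=
  ∑ z : ι → ZMod 2,
    if ∃ x ∈ C, x ≠ 0 ∧ hammingNorm (z + x) ≤ hammingNorm z then
      p ^ hammingNorm z * (1 - p) ^ (Fintype.card ι - hammingNorm z) else 0

/-- Rank of the projection of `C` to the coordinates in `S`. -/
noncomputable def rankC {ι : Type} [Fintype ι] (C : Submodule (ZMod 2) (ι → ZMod 2))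
    (S : Finset ι) : ℕ :=
  Module.finrank (ZMod 2)
    (C.map (LinearMap.funLeft (ZMod 2) (ZMod 2) (Subtype.val : {i // i ∈ S} → ι)))

/-- `f_C(S) = |S| - r_C(S)`. -/
noncomputable def fC {ι : Type} [Fintype ι] (C : Submodule (ZMod 2) (ι → ZMod 2))
    (S : Finset ι) : ℝ :=
  (S.card : ℝ) - (rankC C S : ℝ)

/-- `μ_C(λ) = E_{S ~ λ} f_C(S)`. -/
noncomputable def muC {ι : Type} [Fintype ι] (C : Submodule (ZMod 2) (ι → ZMod 2)) (l : ℝ) : ℝ :=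
  ∑ S : Finset ι, l ^ S.card * (1 - l) ^ (Fintype.card ι - S.card) * fC C S

/-- Bit erasure probability `P_{b,i}(p)`. -/
noncomputable def Pbi {ι : Type} [Fintype ι] [DecidableEq ι]
    (C : Submodule (ZMod 2) (ι → ZMod 2)) (i : ι) (p : ℝ) : ℝ :=
  ∑ R ∈ ((Finset.univ : Finset ι).erase i).powerset,
    (1 - p) ^ R.card * p ^ (Fintype.card ι - R.card) *
      (if rankC C R < rankC C (insert i R) then (1 : ℝ) else 0)

/-- The average EXIT function `h(p)`. -/
noncomputable def exitAvg {ι : Type} [Fintype ι] [DecidableEq ι]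
    (C : Submodule (ZMod 2) (ι → ZMod 2)) (p : ℝ) : ℝ :=
  (1 / (Fintype.card ι : ℝ)) * ∑ i : ι, Pbi C i p / p

/-- The dual code. -/
def dualCode {ι : Type} [Fintype ι] (C : Submodule (ZMod 2) (ι → ZMod 2)) :
    Submodule (ZMod 2) (ι → ZMod 2) where
  carrier := {y | ∀ x ∈ C, ∑ i, x i * y i = 0}
  zero_mem' := by intro x hx; simp
  add_mem' := by
    intro y z hy hz x hx
    simp only [Pi.add_apply, mul_add, Finset.sum_add_distrib, Set.mem_setOf_eq] at *
    rw [hy x hx, hz x hx, add_zero]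
  smul_mem' := by
    intro c y hy x hx
    simp only [Pi.smul_apply, smul_eq_mul]
    rw [show (∑ i, x i * (c * y i)) = c * ∑ i, x i * y i by rw [Finset.mul_sum]; congr 1; funext i; ring, hy x hx, mul_zero]

/-- Adjoining one coordinate raises the rank by at most one: restriction from `insert i R` to `R`
maps one projected code onto the other, and its kernel embeds into `ZMod 2` via coordinate `i`. -/
lemma rank_step {ι : Type} [Fintype ι] [DecidableEq ι] (C : Submodule (ZMod 2) (ι → ZMod 2))
    (i : ι) (R : Finset ι) :
    rankC C R ≤ rankC C (insert i R) ∧ rankC C (insert i R) ≤ rankC C R + 1 := by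
  let inc : {j // j ∈ R} → {j // j ∈ insert i R} := fun j => ⟨j.1, Finset.mem_insert_of_mem j.2⟩
  let V := C.map (LinearMap.funLeft (ZMod 2) (ZMod 2)
    (Subtype.val : {j // j ∈ insert i R} → ι))
  let g : V →ₗ[ZMod 2] ({j // j ∈ R} → ZMod 2) :=
    (LinearMap.funLeft (ZMod 2) (ZMod 2) inc).domRestrict V
  have hrange : LinearMap.range g =
      C.map (LinearMap.funLeft (ZMod 2) (ZMod 2) (Subtype.val : {j // j ∈ R} → ι)) := by
    ext y
    constructor
    · rintro ⟨⟨v, c, hc, rfl⟩, rfl⟩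
      exact ⟨c, hc, rfl⟩
    · rintro ⟨c, hc, rfl⟩
      exact ⟨⟨_, c, hc, rfl⟩, rfl⟩
  let e : LinearMap.ker g →ₗ[ZMod 2] ZMod 2 :=
    (LinearMap.proj (⟨i, Finset.mem_insert_self i R⟩ : {j // j ∈ insert i R})).comp
      (V.subtype.comp (LinearMap.ker g).subtype)
  have he : Function.Injective e := by
    rw [← LinearMap.ker_eq_bot, LinearMap.ker_eq_bot']
    rintro ⟨⟨v, hv⟩, hk⟩ h
    ext ⟨j, hj⟩
    rcases Finset.mem_insert.1 hj with rfl | hjR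
    · exact h
    · exact congrFun (LinearMap.mem_ker.1 hk) ⟨j, hjR⟩
  have hker := LinearMap.finrank_le_finrank_of_injective he
  rw [Module.finrank_self] at hker
  have hrn := LinearMap.finrank_range_add_finrank_ker g
  rw [hrange] at hrn
  change rankC C R + _ = rankC C (insert i R) at hrn
  omega

lemma fC_step {ι : Type} [Fintype ι] [DecidableEq ι] (C : Submodule (ZMod 2) (ι → ZMod 2))
    (i : ι) (R : Finset ι) (hi : i ∉ R) :
    fC C (insert i R) - fC C R =
      1 - (if rankC C R < rankC C (insert i R) then (1 : ℝ) else 0) := by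
  obtain ⟨h1, h2⟩ := rank_step C i R
  unfold fC
  rw [Finset.card_insert_of_notMem hi]
  split_ifs with h
  · have : rankC C (insert i R) = rankC C R + 1 := by omega
    rw [this]; push_cast; ring
  · have : rankC C (insert i R) = rankC C R := by omega
    rw [this]; push_cast; ring

/-- formula for the bit erasure probability. -/
theorem Pbi_formula (n : ℕ) (C : Submodule (ZMod 2) (Fin n → ZMod 2)) (i : Fin n)
    (l : ℝ) (h0 : 0 < l) (h1 : l < 1) :
    Pbi C i (1 - l) =
      (1 - l) - ((1 - l) / l) *
        ∑ S ∈ (Finset.univ : Finset (Finset (Fin n))).filter (fun S => i ∈ S),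
          l ^ S.card * (1 - l) ^ (n - S.card) * (fC C S - fC C (S.erase i)) := by
  have hreindex : ∑ S ∈ (Finset.univ : Finset (Finset (Fin n))).filter (fun S => i ∈ S),
        l ^ S.card * (1 - l) ^ (n - S.card) * (fC C S - fC C (S.erase i)) =
      ∑ R ∈ ((Finset.univ : Finset (Fin n)).erase i).powerset,
        l ^ (R.card + 1) * (1 - l) ^ (n - (R.card + 1)) *
          (1 - (if rankC C R < rankC C (insert i R) then (1 : ℝ) else 0)) := by
    refine Finset.sum_bij' (fun S _ => S.erase i) (fun R _ => insert i R) ?_ ?_ ?_ ?_ ?_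
    · intro S _
      exact Finset.mem_powerset.2 (Finset.erase_subset_erase i (Finset.subset_univ S))
    · intro R _
      simp
    · intro S hS
      exact Finset.insert_erase (Finset.mem_filter.1 hS).2
    · intro R hR
      exact Finset.erase_insert fun h => by simpa using Finset.mem_powerset.1 hR h
    · intro S hS
      have hi : i ∈ S := (Finset.mem_filter.1 hS).2
      have h := fC_step C i (S.erase i) (Finset.notMem_erase i S)
      rw [Finset.card_erase_add_one hi, ← h, Finset.insert_erase hi]
  have hcard : ((Finset.univ : Finset (Fin n)).erase i).card = n - 1 := by simp
  have hbinom := Finset.sum_pow_mul_eq_add_pow l (1 - l) ((Finset.univ : Finset (Fin n)).erase i)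
  rw [hcard, add_sub_cancel, one_pow] at hbinom
  have hmain : (1 - l) = ∑ R ∈ ((Finset.univ : Finset (Fin n)).erase i).powerset,
      (1 - l) * (l ^ R.card * (1 - l) ^ (n - 1 - R.card)) := by
    rw [← Finset.mul_sum, hbinom, mul_one]
  rw [hreindex, eq_sub_iff_add_eq, Finset.mul_sum]
  conv_rhs => rw [hmain]
  unfold Pbi
  rw [← Finset.sum_add_distrib]
  refine Finset.sum_congr rfl fun R hR => ?_
  have hle : R.card ≤ n - 1 := hcard ▸ Finset.card_le_card (Finset.mem_powerset.1 hR)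
  have hpos := i.pos
  have hexp : n - R.card = (n - 1 - R.card) + 1 := by omega
  have hexp' : n - (R.card + 1) = n - 1 - R.card := by omega
  rw [Fintype.card_fin, hexp, hexp', sub_sub_cancel]
  field_simp
  ring
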